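/- arXiv:1607.06364 — 3 statements merged into one kernel-verified Lean document; each statement's English description precedes it below -/
import Mathlib

section
/- Let K and Λ be real symmetric positive-semidefinite N×N matrices (kernel matrix and graph Laplacian), let S ⊆ {1,…,N} be a set of labeled indices, let J be the diagonal matrix with J_{ii} = 1 if i ∈ S and J_{ii} = 0 otherwise, let ŷ ∈ ℝ^N satisfy ŷ_i = 0 for all i ∉ S, and let γ_A > 0, γ_I ≥ 0. If the matrix M = JK + γ_A I + γ_I ΛK is invertible, then α* = M⁻¹ŷ is a global minimizer over ℝ^N of the Laplacian kernel ridge regression objective F(α) = Σ_{i∈S} (ŷ_i − (Kα)_i)² + γ_A αᵀKα + γ_I αᵀKΛKα. -/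
/-!
`F` is a convex quadratic. Expanding it around `a = M⁻¹ ŷ` with increment `d`, the linear part is
`2 (K d) ⬝ᵥ (M a - ŷ) = 0`, and the quadratic part
`∑ i ∈ S, (K d)ᵢ² + γA (d ⬝ᵥ K d) + γI (K d ⬝ᵥ Λ K d)` is nonnegative because `K` and `Λ` are
positive semidefinite. Hence `F a ≤ F (a + d)` for every `d`.
-/

open Matrix

/-- Expansion of a quadratic form with symmetric matrix. -/
lemma quadForm_add {N : ℕ} {A : Matrix (Fin N) (Fin N) ℝ} (hA : A.IsHermitian)
    (x y : Fin N → ℝ) :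
    (x + y) ⬝ᵥ A *ᵥ (x + y) = x ⬝ᵥ A *ᵥ x + 2 * (y ⬝ᵥ A *ᵥ x) + y ⬝ᵥ A *ᵥ y := by
  have h : x ⬝ᵥ A *ᵥ y = y ⬝ᵥ A *ᵥ x := by
    have hT : Aᵀ = A := by simpa using hA.eq
    rw [dotProduct_mulVec, ← mulVec_transpose, hT, dotProduct_comm]
  rw [mulVec_add, add_dotProduct, dotProduct_add, dotProduct_add, h]
  ring

theorem stmt12 (N : ℕ) (K Lap : Matrix (Fin N) (Fin N) ℝ)
    (hK : K.PosSemidef) (hLap : Lap.PosSemidef)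
    (S : Finset (Fin N)) (J : Matrix (Fin N) (Fin N) ℝ)
    (hJ : J = Matrix.diagonal (fun i => if i ∈ S then (1 : ℝ) else 0))
    (yhat : Fin N → ℝ) (hyhat : ∀ i ∉ S, yhat i = 0)
    (γA γI : ℝ) (hγA : 0 < γA) (hγI : 0 ≤ γI)
    (hM : IsUnit (J * K + γA • (1 : Matrix (Fin N) (Fin N) ℝ) + γI • (Lap * K))) :
    let F : (Fin N → ℝ) → ℝ := fun α =>
      ∑ i ∈ S, (yhat i - K.mulVec α i) ^ 2 + γA * (α ⬝ᵥ K.mulVec α)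
        + γI * (α ⬝ᵥ (K * Lap * K).mulVec α)
    ∀ α, F ((J * K + γA • (1 : Matrix (Fin N) (Fin N) ℝ) + γI • (Lap * K))⁻¹.mulVec yhat)
        ≤ F α := by
  intro F α
  set M := J * K + γA • (1 : Matrix (Fin N) (Fin N) ℝ) + γI • (Lap * K) with hMdef
  set a := M⁻¹ *ᵥ yhat with ha
  obtain ⟨d, rfl⟩ : ∃ d, α = a + d := ⟨α - a, by simp⟩
  have hKT : Kᵀ = K := by simpa using hK.1.eq
  have hMa : J *ᵥ (K *ᵥ a) + γA • a + γI • (Lap *ᵥ (K *ᵥ a)) = yhat := by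
    have h : M *ᵥ a = yhat := by
      rw [ha, mulVec_mulVec, mul_nonsing_inv _ ((isUnit_iff_isUnit_det M).1 hM), one_mulVec]
    simpa [hMdef, add_mulVec, smul_mulVec, mulVec_mulVec] using h
  have hKLK (x : Fin N → ℝ) : x ⬝ᵥ (K * Lap * K) *ᵥ x = (K *ᵥ x) ⬝ᵥ Lap *ᵥ (K *ᵥ x) := by
    rw [← mulVec_mulVec, ← mulVec_mulVec, dotProduct_mulVec, ← mulVec_transpose, hKT]
  have hJdot : (K *ᵥ d) ⬝ᵥ J *ᵥ (K *ᵥ a) = ∑ i ∈ S, (K *ᵥ d) i * (K *ᵥ a) i := by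
    simp [hJ, dotProduct, mulVec_diagonal]
  have hydot : (K *ᵥ d) ⬝ᵥ yhat = ∑ i ∈ S, (K *ᵥ d) i * yhat i :=
    (Finset.sum_subset (Finset.subset_univ S) fun i _ hi => by simp [hyhat i hi]).symm
  -- The derivative of `F` at `a` in the direction `d` vanishes (up to a factor 2).
  have hlin : ∑ i ∈ S, (K *ᵥ d) i * (K *ᵥ a) i + γA * (d ⬝ᵥ K *ᵥ a)
      + γI * ((K *ᵥ d) ⬝ᵥ Lap *ᵥ (K *ᵥ a)) = ∑ i ∈ S, (K *ᵥ d) i * yhat i := by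
    have hda : d ⬝ᵥ K *ᵥ a = (K *ᵥ d) ⬝ᵥ a := by
      rw [dotProduct_mulVec, ← mulVec_transpose, hKT]
    rw [← hydot, ← hJdot, hda]
    conv_rhs => rw [← hMa]
    simp only [dotProduct_add, dotProduct_smul, smul_eq_mul]
  have hsum : ∑ i ∈ S, (yhat i - (K *ᵥ (a + d)) i) ^ 2 =
      ∑ i ∈ S, (yhat i - (K *ᵥ a) i) ^ 2 - 2 * ∑ i ∈ S, (K *ᵥ d) i * yhat i
        + 2 * ∑ i ∈ S, (K *ᵥ d) i * (K *ᵥ a) i + ∑ i ∈ S, (K *ᵥ d) i ^ 2 := by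
    simp only [Finset.mul_sum, ← Finset.sum_sub_distrib, ← Finset.sum_add_distrib]
    refine Finset.sum_congr rfl fun i _ => ?_
    rw [mulVec_add, Pi.add_apply]
    ring
  have h1 : 0 ≤ ∑ i ∈ S, (K *ᵥ d) i ^ 2 := Finset.sum_nonneg fun i _ => sq_nonneg _
  have h2 : 0 ≤ γA * (d ⬝ᵥ K *ᵥ d) :=
    mul_nonneg hγA.le (by simpa using hK.dotProduct_mulVec_nonneg d)
  have h3 : 0 ≤ γI * ((K *ᵥ d) ⬝ᵥ Lap *ᵥ (K *ᵥ d)) :=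
    mul_nonneg hγI (by simpa using hLap.dotProduct_mulVec_nonneg (K *ᵥ d))
  simp only [F]
  rw [hKLK, hKLK, hsum, quadForm_add hK.1, mulVec_add K a d, quadForm_add hLap.1]
  linarith
end

section
/- Consider N ≥ 1 agents. For each agent k let L_k, U_k ≥ 0 with totals L = Σ_k L_k ≥ 1 and U = Σ_k U_k ≥ 1; let x_{k,1},…,x_{k,L_k} ∈ ℝ^d with labels y_{k,i} ∈ {−1,+1} be the labeled data and x̂_{k,1},…,x̂_{k,U_k} ∈ ℝ^d the unlabeled data of agent k. Fix C₁, C₂ > 0, s > 0 and b ∈ ℝ, and define on ℝ^d: l_k(w) = (C₁/(2L)) Σ_{i=1}^{L_k} max(0, 1 − y_{k,i}(wᵀx_{k,i} + b))², g_k(w) = (C₂/(2U)) Σ_{i=1}^{U_k} exp(−s(wᵀx̂_{k,i} + b)²), r(w) = (1/2)‖w‖², and J(w) = Σ_k l_k(w) + Σ_k g_k(w) + r(w). Let C be a symmetric N×N matrix with nonnegative entries, rows summing to one, and spectral radius of C − (1/N)11ᵀ strictly less than 1. Let (α[n])_{n≥0} satisfy α[n] ∈ (0,1] for all n, Σ_n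 α[n] = ∞ and Σ_n α[n]² < ∞. Define iterates w_k[0] ∈ ℝ^d and, for n ≥ 0, ψ_k[n] = w_k[n] − α[n](∇l_k(w_k[n]) + ∇g_k(w_k[n]) + (1/N)∇r(w_k[n])) and w_k[n+1] = Σ_{t=1}^N C_{kt} ψ_t[n], and set w̄[n] = (1/N)Σ_k w_k[n]. If the sequence (w̄[n])_n is bounded, then: (a) every cluster point w* of (w̄[n])_n is a stationary point of J, i.e. ∇J(w*) = 0; and (b) the agents asymptotically reach consensus: ‖w_k[n] − w̄[n]‖ → 0 as n → ∞ for every k. -/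
/-!
Each local cost `l k + g k + r / N` is a finite combination of functions of `⟪w, z⟫` and of `‖w‖²`,
with globally Lipschitz gradient `h k` (`hasLipGrad_hinge`, `hasLipGrad_gauss`,
`hasLipGrad_half_norm_sq`), and `∇J = ∑ k, h k`.

*Consensus.* With `A = C - 11ᵀ/N`, the disagreements `e k = w k - w̄` satisfy
`e⁺ = A (e - α h(w))`. As `A` is symmetric with spectral radius below one, it contracts the
Euclidean norm (`exists_contraction`). Since `w̄` is bounded, `‖h k (w k)‖ ≤ K ‖e k‖ + H`, and since
`∑ α² < ∞`, the resulting recursion yields `∑ ‖e‖² < ∞` (`summable_disagreement`), hence consensus.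

*Stationarity.* By double stochasticity `w̄⁺ = w̄ - (α/N) ∑ k, h k (w k)`, a gradient step for `J`
whose error is square summable. The descent lemma and `J ≥ 0` give `∑ α ‖∇J(w̄)‖² < ∞`; as
`‖∇J(w̄)‖` changes by `O(α)` per step and `∑ α = ∞`, it tends to zero
(`tendsto_zero_of_summable_mul_sq`, `tendsto_gradient_zero`). Continuity of `∇J` then gives
`∇J = 0` at every cluster point.
-/

open Matrix Filter
open scoped RealInnerProductSpace

/-! ### Scalar sequences -/

theorem summable_of_contracting {a c : ℕ → ℝ} {q : ℝ} (ha : ∀ n, 0 ≤ a n) (hc0 : ∀ n, 0 ≤ c n)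
    (hq : q < 1) (hc : Summable c) (h : ∀ n, a (n + 1) ≤ q * a n + c n) : Summable a := by
  have key : ∀ m, ∑ n ∈ Finset.range m, a n ≤ (a 0 + ∑' n, c n) / (1 - q) := by
    intro m
    have h1 : ∑ n ∈ Finset.range (m + 1), a n
        ≤ a 0 + q * ∑ n ∈ Finset.range m, a n + ∑ n ∈ Finset.range m, c n := by
      rw [Finset.sum_range_succ', Finset.mul_sum, add_assoc, ← Finset.sum_add_distrib, add_comm]
      gcongr with n
      exact h n
    have h2 : ∑ n ∈ Finset.range m, c n ≤ ∑' n, c n := hc.sum_le_tsum _ fun i _ => hc0 i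
    rw [Finset.sum_range_succ] at h1
    rw [le_div_iff₀ (by linarith)]
    nlinarith [ha m]
  exact summable_of_sum_range_le ha key

/-- The perturbed version of `summable_of_contracting`: the factor need only tend to `q < 1`, so the
recursion is applied to a tail on which it is at most `(1 + q) / 2`. -/
theorem summable_of_eventually_contracting {a c : ℕ → ℝ} {q B : ℝ} (ha : ∀ n, 0 ≤ a n)
    (hc0 : ∀ n, 0 ≤ c n) (hq : q < 1) (hc : Summable c)
    (h : ∀ n, a (n + 1) ≤ (q + B * c n) * a n + B * c n) : Summable a := by
  have ht : Tendsto (fun n => q + |B| * c n) atTop (nhds (q + |B| * 0)) :=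
    (hc.tendsto_atTop_zero.const_mul _).const_add _
  have hev := ht.eventually (gt_mem_nhds (show q + |B| * 0 < (1 + q) / 2 by linarith))
  obtain ⟨n₀, hn₀⟩ := eventually_atTop.1 hev
  rw [← summable_nat_add_iff n₀]
  refine summable_of_contracting (q := (1 + q) / 2) (c := fun n => |B| * c (n + n₀))
    (fun n => ha _) (fun n => mul_nonneg (abs_nonneg _) (hc0 _)) (by linarith)
    (((summable_nat_add_iff n₀).2 hc).mul_left _) fun n => ?_
  have h1 := h (n + n₀)
  have h2 := hn₀ (n + n₀) (by omega)
  have h3 : B * c (n + n₀) ≤ |B| * c (n + n₀) := mul_le_mul_of_nonneg_right (le_abs_self _) (hc0 _)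
  have h4 : (q + B * c (n + n₀)) * a (n + n₀) ≤ (1 + q) / 2 * a (n + n₀) :=
    mul_le_mul_of_nonneg_right (by linarith) (ha _)
  rw [show n + 1 + n₀ = n + n₀ + 1 by ring]
  linarith

/-- If `∑ α = ∞`, `∑ α u² < ∞` and `u` moves by at most a multiple of `α` in each step, then `u → 0`.
The increments of `u³` are `O(α u² + α²)`, hence summable, so `u³` converges; a nonzero limit would
make `∑ α` converge. -/
theorem tendsto_zero_of_summable_mul_sq {α u : ℕ → ℝ} {c : ℝ} (hα : ∀ n, α n ∈ Set.Ioc (0 : ℝ) 1)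
    (hα2 : ¬ Summable α) (hα3 : Summable fun n => (α n) ^ 2) (hu : ∀ n, 0 ≤ u n)
    (hc : ∀ n, |u (n + 1) - u n| ≤ c * α n)
    (hs : Summable fun n => α n * u n ^ 2) : Tendsto u atTop (nhds 0) := by
  have hc0 : 0 ≤ c := by
    have := (abs_nonneg _).trans (hc 0)
    exact nonneg_of_mul_nonneg_left this (hα 0).1
  have hcau : CauchySeq fun n => u n ^ 3 := by
    apply cauchySeq_of_summable_dist
    refine Summable.of_nonneg_of_le (fun _ => dist_nonneg) (fun n => ?_)
      ((hs.mul_left (5 * c)).add (hα3.mul_left (3 * c ^ 3)))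
    obtain ⟨ha0, ha1⟩ := hα n
    have h1 := hc n
    have h2 : u (n + 1) ≤ u n + c * α n := by linarith [(abs_le.1 h1).2]
    have h3 : u (n + 1) ^ 2 ≤ 2 * u n ^ 2 + 2 * (c * α n) ^ 2 := by
      have : u (n + 1) ^ 2 ≤ (u n + c * α n) ^ 2 := pow_le_pow_left₀ (hu _) h2 2
      nlinarith [sq_nonneg (u n - c * α n)]
    have h4 : u (n + 1) ^ 2 + u (n + 1) * u n + u n ^ 2
        ≤ 5 * u n ^ 2 + 3 * (c * α n) ^ 2 := by
      nlinarith [sq_nonneg (u n - u (n + 1)), sq_nonneg (u n)]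
    have h5 : 0 ≤ u (n + 1) ^ 2 + u (n + 1) * u n + u n ^ 2 := by
      have := hu n; have := hu (n + 1); positivity
    rw [Real.dist_eq, abs_sub_comm,
      show u n.succ ^ 3 - u n ^ 3
        = (u (n + 1) - u n) * (u (n + 1) ^ 2 + u (n + 1) * u n + u n ^ 2) by
          rw [Nat.succ_eq_add_one]; ring, abs_mul, abs_of_nonneg h5]
    calc |u (n + 1) - u n| * (u (n + 1) ^ 2 + u (n + 1) * u n + u n ^ 2)
        ≤ (c * α n) * (5 * u n ^ 2 + 3 * (c * α n) ^ 2) := by gcongr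
      _ = 5 * c * (α n * u n ^ 2) + 3 * c ^ 3 * (α n ^ 2 * α n) := by ring
      _ ≤ 5 * c * (α n * u n ^ 2) + 3 * c ^ 3 * (α n ^ 2 * 1) := by gcongr
      _ = _ := by ring
  obtain ⟨L, hL⟩ := cauchySeq_tendsto_of_complete hcau
  have hL0 : 0 ≤ L := ge_of_tendsto' hL fun n => pow_nonneg (hu n) 3
  have hLz : L = 0 := by
    by_contra hne
    have hLpos : 0 < L := lt_of_le_of_ne hL0 (Ne.symm hne)
    apply hα2
    -- Eventually `δ ≤ u` for `δ = min 1 (L / 2)`, because `δ³ ≤ δ ≤ L / 2 < u³`.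
    set δ := min 1 (L / 2) with hδ
    have hδ0 : 0 < δ := by positivity
    have hev : ∀ᶠ n in atTop, L / 2 < u n ^ 3 := hL.eventually (lt_mem_nhds (by linarith))
    refine Summable.of_norm_bounded_eventually_nat (hs.mul_left (1 / δ ^ 2)) ?_
    filter_upwards [hev] with n hn
    have h1 : δ ≤ u n := by
      by_contra! hlt
      have h2 : u n ^ 3 ≤ δ ^ 3 := pow_le_pow_left₀ (hu n) hlt.le 3
      have h3 : δ ^ 3 ≤ δ := pow_le_of_le_one hδ0.le (min_le_left _ _) (by norm_num)
      have h4 : δ ≤ L / 2 := min_le_right _ _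
      linarith
    have h2 : δ ^ 2 ≤ u n ^ 2 := pow_le_pow_left₀ hδ0.le h1 2
    rw [Real.norm_of_nonneg (hα n).1.le, one_div, inv_mul_eq_div, le_div_iff₀ (by positivity)]
    exact mul_le_mul_of_nonneg_left h2 (hα n).1.le
  rw [hLz] at hL
  have := hL.rpow_const (p := 1 / 3) (Or.inr (by norm_num))
  rw [Real.zero_rpow (by norm_num)] at this
  refine this.congr fun n => ?_
  rw [← Real.rpow_natCast, ← Real.rpow_mul (hu n)]
  norm_num

/-! ### The mixing matrix -/

theorem norm_sq_mulVec_le {N : ℕ} {A : Matrix (Fin N) (Fin N) ℝ} (hA : A.IsHermitian) {ρ : ℝ}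
    (hρ : ∀ i, |hA.eigenvalues i| ≤ ρ) (v : Fin N → ℝ) :
    ∑ k, (∑ t, A k t * v t) ^ 2 ≤ ρ ^ 2 * ∑ t, v t ^ 2 := by
  have hsym : (Matrix.toEuclideanLin A).IsSymmetric := Matrix.isSymmetric_toEuclideanLin_iff.2 hA
  have heig : ∀ i, Matrix.toEuclideanLin A (hA.eigenvectorBasis i)
      = hA.eigenvalues i • hA.eigenvectorBasis i := by
    intro i
    ext j
    have := congrFun (hA.mulVec_eigenvectorBasis i) j
    simpa [Matrix.toLpLin_apply] using this
  set V : EuclideanSpace ℝ (Fin N) := WithLp.toLp 2 v with hV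
  have h1 : ∑ k, (∑ t, A k t * v t) ^ 2 = ‖Matrix.toEuclideanLin A V‖ ^ 2 := by
    rw [EuclideanSpace.real_norm_sq_eq]
    simp [Matrix.mulVec, dotProduct, hV]
  have h2 : ∑ t, v t ^ 2 = ‖V‖ ^ 2 := by
    rw [EuclideanSpace.real_norm_sq_eq]
  rw [h1, h2, ← hA.eigenvectorBasis.sum_sq_norm_inner_right,
    ← hA.eigenvectorBasis.sum_sq_norm_inner_right V, Finset.mul_sum]
  refine Finset.sum_le_sum fun i _ => ?_
  rw [← hsym, heig, real_inner_smul_left, norm_mul, mul_pow]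
  gcongr
  exact hρ i

theorem exists_contraction {d N : ℕ} {A : Matrix (Fin N) (Fin N) ℝ} (hA : A.IsHermitian)
    (hspec : spectralRadius ℝ A < 1) :
    ∃ q : ℝ, 0 ≤ q ∧ q < 1 ∧ ∀ v : Fin N → EuclideanSpace ℝ (Fin d),
      ∑ k, ‖∑ t, A k t • v t‖ ^ 2 ≤ q * ∑ t, ‖v t‖ ^ 2 := by
  set ρ := (spectralRadius ℝ A).toReal
  have hρ0 : 0 ≤ ρ := ENNReal.toReal_nonneg
  have hρ1 : ρ < 1 := by
    have := (ENNReal.toReal_lt_toReal hspec.ne_top ENNReal.one_ne_top).2 hspec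
    simpa using this
  have hρ : ∀ i, |hA.eigenvalues i| ≤ ρ := by
    intro i
    have h1 : (‖hA.eigenvalues i‖₊ : ENNReal) ≤ spectralRadius ℝ A :=
      le_iSup₂ (f := fun (k : ℝ) (_ : k ∈ spectrum ℝ A) => (‖k‖₊ : ENNReal)) _
        (hA.eigenvalues_mem_spectrum_real i)
    simpa using ENNReal.toReal_mono hspec.ne_top h1
  refine ⟨ρ ^ 2, by positivity, by nlinarith, fun v => ?_⟩
  simp only [EuclideanSpace.real_norm_sq_eq]
  rw [Finset.sum_comm, Finset.sum_comm (s := Finset.univ (α := Fin N)), Finset.mul_sum]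
  refine Finset.sum_le_sum fun j _ => ?_
  simpa using norm_sq_mulVec_le hA hρ fun t => v t j

/-! ### Functions with Lipschitz gradient -/

/-- `f` has gradient `G` everywhere, and `G` is globally Lipschitz. -/
def HasLipGrad {E : Type*} [NormedAddCommGroup E] [InnerProductSpace ℝ E] [CompleteSpace E]
    (f : E → ℝ) (G : E → E) : Prop :=
  (∀ w, HasGradientAt f (G w) w) ∧ ∃ K : ℝ, 0 ≤ K ∧ ∀ u v, ‖G u - G v‖ ≤ K * ‖u - v‖

section LipGrad

variable {E : Type*} [NormedAddCommGroup E] [InnerProductSpace ℝ E] [CompleteSpace E]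

theorem HasLipGrad.add {f₁ f₂ : E → ℝ} {G₁ G₂ : E → E} (h₁ : HasLipGrad f₁ G₁)
    (h₂ : HasLipGrad f₂ G₂) : HasLipGrad (fun w => f₁ w + f₂ w) fun w => G₁ w + G₂ w := by
  obtain ⟨d₁, K₁, hK₁, hL₁⟩ := h₁
  obtain ⟨d₂, K₂, hK₂, hL₂⟩ := h₂
  refine ⟨fun w => ?_, K₁ + K₂, by positivity, fun u v => ?_⟩
  · rw [hasGradientAt_iff_hasFDerivAt, map_add]
    exact (d₁ w).hasFDerivAt.add (d₂ w).hasFDerivAt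
  · rw [add_sub_add_comm, add_mul]
    exact (norm_add_le _ _).trans (add_le_add (hL₁ u v) (hL₂ u v))

theorem HasLipGrad.const_mul {f : E → ℝ} {G : E → E} (h : HasLipGrad f G) (c : ℝ) :
    HasLipGrad (fun w => c * f w) fun w => c • G w := by
  obtain ⟨d, K, hK, hL⟩ := h
  refine ⟨fun w => ?_, |c| * K, by positivity, fun u v => ?_⟩
  · rw [hasGradientAt_iff_hasFDerivAt, map_smulₛₗ]
    exact (d w).hasFDerivAt.const_mul c
  · rw [← smul_sub, norm_smul, mul_assoc]
    exact mul_le_mul_of_nonneg_left (hL u v) (abs_nonneg c)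

theorem HasLipGrad.sum {ι : Type*} {f : ι → E → ℝ} {G : ι → E → E} (s : Finset ι)
    (h : ∀ i, HasLipGrad (f i) (G i)) :
    HasLipGrad (fun w => ∑ i ∈ s, f i w) fun w => ∑ i ∈ s, G i w := by
  classical
  induction s using Finset.induction_on with
  | empty => exact ⟨fun w => by simpa using hasGradientAt_const w (0 : ℝ), 0, le_rfl, by simp⟩
  | insert i s hi ih =>
    simp only [Finset.sum_insert hi]
    exact (h i).add ih

theorem HasLipGrad.comp_inner {φ φ' : ℝ → ℝ} {K : ℝ} (hφ : ∀ t, HasDerivAt φ (φ' t) t)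
    (hK : 0 ≤ K) (hL : ∀ t t', |φ' t - φ' t'| ≤ K * |t - t'|) (z : E) :
    HasLipGrad (fun w => φ ⟪w, z⟫) fun w => φ' ⟪w, z⟫ • z := by
  refine ⟨fun w => ?_, K * ‖z‖ ^ 2, by positivity, fun u v => ?_⟩
  · rw [hasGradientAt_iff_hasFDerivAt, map_smulₛₗ]
    have h1 : HasFDerivAt (fun w : E => ⟪w, z⟫) (InnerProductSpace.toDual ℝ E z) w := by
      have := (InnerProductSpace.toDual ℝ E z).hasFDerivAt (x := w)
      refine this.congr_of_eventuallyEq (Eventually.of_forall fun v => ?_)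
      simp [real_inner_comm]
    exact (hφ _).comp_hasFDerivAt w h1
  · rw [← sub_smul, norm_smul, Real.norm_eq_abs]
    have h1 : |⟪u, z⟫ - ⟪v, z⟫| ≤ ‖u - v‖ * ‖z‖ := by
      rw [← inner_sub_left]; exact abs_real_inner_le_norm _ _
    calc |φ' ⟪u, z⟫ - φ' ⟪v, z⟫| * ‖z‖ ≤ K * (‖u - v‖ * ‖z‖) * ‖z‖ := by
          gcongr; exact (hL _ _).trans (by gcongr)
      _ = K * ‖z‖ ^ 2 * ‖u - v‖ := by ring

theorem hasLipGrad_half_norm_sq : HasLipGrad (fun w : E => (1 / 2) * ‖w‖ ^ 2) fun w => w := by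
  refine ⟨fun w => ?_, 1, zero_le_one, by simp⟩
  rw [hasGradientAt_iff_hasFDerivAt]
  refine ((hasStrictFDerivAt_norm_sq w).hasFDerivAt.const_mul (1 / 2)).congr_fderiv ?_
  ext v
  simp

/-- The descent lemma, with the constant `K` instead of the optimal `K / 2`. -/
theorem le_of_hasGradientAt {f : E → ℝ} {G : E → E} {K : ℝ} (hf : ∀ w, HasGradientAt f (G w) w)
    (hK : 0 ≤ K) (hL : ∀ u v, ‖G u - G v‖ ≤ K * ‖u - v‖) (u v : E) :
    f v ≤ f u + ⟪G u, v - u⟫ + K * ‖v - u‖ ^ 2 := by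
  have h := (convex_closedBall u ‖v - u‖).norm_image_sub_le_of_norm_hasFDerivWithin_le'
    (f := f) (f' := fun w => InnerProductSpace.toDual ℝ E (G w))
    (φ := InnerProductSpace.toDual ℝ E (G u)) (C := K * ‖v - u‖) (x := u) (y := v)
    (fun w _ => (hf w).hasFDerivAt.hasFDerivWithinAt)
    (fun w hw => by
      rw [← map_sub, LinearIsometryEquiv.norm_map]
      rw [mem_closedBall_iff_norm] at hw
      exact (hL w u).trans (by gcongr))
    (by simp) (by simp [dist_eq_norm])
  rw [InnerProductSpace.toDual_apply_apply, Real.norm_eq_abs] at h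
  linarith [(abs_le.1 h).2]

end LipGrad

/-! ### The two loss functions -/

theorem hasDerivAt_max_sq (t : ℝ) : HasDerivAt (fun t : ℝ => (max 0 t) ^ 2) (2 * max 0 t) t := by
  rcases lt_trichotomy t 0 with h | h | h
  · rw [max_eq_left h.le, mul_zero]
    refine (hasDerivAt_const t (0 : ℝ)).congr_of_eventuallyEq ?_
    filter_upwards [gt_mem_nhds h] with s hs
    simp [max_eq_left (le_of_lt hs)]
  · subst h
    rw [max_self, mul_zero, hasDerivAt_iff_isLittleO_nhds_zero]
    have h1 : (fun h : ℝ => h ^ 2) =o[nhds 0] fun h : ℝ => h := by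
      simpa using Asymptotics.isLittleO_pow_pow (𝕜 := ℝ) (show 1 < 2 by norm_num)
    refine (Asymptotics.IsBigO.of_bound 1 (Eventually.of_forall fun s => ?_)).trans_isLittleO h1
    rcases le_total 0 s with hs | hs <;> simp [hs, sq_nonneg]
  · rw [max_eq_right h.le]
    refine (by simpa using hasDerivAt_pow 2 t : HasDerivAt (fun s : ℝ => s ^ 2) (2 * t) t)
      |>.congr_of_eventuallyEq ?_
    filter_upwards [lt_mem_nhds h] with s hs
    simp [max_eq_right (le_of_lt hs)]

theorem hasLipGrad_hinge {E : Type*} [NormedAddCommGroup E] [InnerProductSpace ℝ E]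
    [CompleteSpace E] (y b : ℝ) (z : E) :
    ∃ G, HasLipGrad (fun w : E => (max 0 (1 - y * (⟪w, z⟫ + b))) ^ 2) G := by
  refine ⟨_, HasLipGrad.comp_inner (φ := fun t => (max 0 (1 - y * (t + b))) ^ 2)
    (φ' := fun t => 2 * max 0 (1 - y * (t + b)) * (-y)) (K := 2 * y ^ 2)
    (fun t => ?_) (by positivity) (fun t t' => ?_) z⟩
  · have h1 : HasDerivAt (fun t : ℝ => 1 - y * (t + b)) (-y) t := by
      simpa using (((hasDerivAt_id t).add_const b).const_mul y).const_sub 1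
    exact (hasDerivAt_max_sq _).comp t h1
  · have h1 : |max 0 (1 - y * (t + b)) - max 0 (1 - y * (t' + b))| ≤ |y| * |t - t'| := by
      refine (abs_max_sub_max_le_max _ _ _ _).trans ?_
      rw [sub_self, abs_zero, max_eq_right (abs_nonneg _),
        show 1 - y * (t + b) - (1 - y * (t' + b)) = -(y * (t - t')) by ring, abs_neg, abs_mul]
    rw [← sub_mul, ← mul_sub, abs_mul, abs_mul, abs_neg, abs_two, ← sq_abs y]
    calc _ ≤ 2 * (|y| * |t - t'|) * |y| := by gcongr
      _ = _ := by ring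

theorem hasLipGrad_gauss {E : Type*} [NormedAddCommGroup E] [InnerProductSpace ℝ E]
    [CompleteSpace E] {s : ℝ} (hs : 0 < s) (b : ℝ) (z : E) :
    ∃ G, HasLipGrad (fun w : E => Real.exp (-s * (⟪w, z⟫ + b) ^ 2)) G := by
  have hin : ∀ t : ℝ, HasDerivAt (fun t : ℝ => Real.exp (-s * (t + b) ^ 2))
      (Real.exp (-s * (t + b) ^ 2) * (-s * (2 * (t + b)))) t := by
    intro t
    have h1 : HasDerivAt (fun t : ℝ => -s * (t + b) ^ 2) (-s * (2 * (t + b))) t := by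
      simpa using (((hasDerivAt_id t).add_const b).pow 2).const_mul (-s)
    exact h1.exp
  have hin2 : ∀ t : ℝ, HasDerivAt (fun t : ℝ => Real.exp (-s * (t + b) ^ 2) * (-s * (2 * (t + b))))
      (Real.exp (-s * (t + b) ^ 2) * (-s * (2 * (t + b))) * (-s * (2 * (t + b)))
        + Real.exp (-s * (t + b) ^ 2) * (-s * 2)) t := by
    intro t
    refine (hin t).mul ?_
    simpa using (((hasDerivAt_id t).add_const b).const_mul 2).const_mul (-s)
  refine ⟨_, HasLipGrad.comp_inner (φ := fun t => Real.exp (-s * (t + b) ^ 2))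
    (K := 6 * s) hin (by positivity) (fun t t' => ?_) z⟩
  refine (convex_univ (𝕜 := ℝ)).norm_image_sub_le_of_norm_hasDerivWithin_le
    (fun r _ => (hin2 r).hasDerivWithinAt) (fun r _ => ?_) (Set.mem_univ t') (Set.mem_univ t)
  -- The second derivative is `exp (-m) * (4 s m - 2 s)` with `m = s (r + b)²`, and `m exp (-m) ≤ 1`.
  have hm0 : 0 ≤ s * (r + b) ^ 2 := by positivity
  have he0 := Real.exp_pos (-s * (r + b) ^ 2)
  have he1 : Real.exp (-s * (r + b) ^ 2) ≤ 1 := Real.exp_le_one_iff.2 (by linarith)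
  have hme : s * (r + b) ^ 2 * Real.exp (-s * (r + b) ^ 2) ≤ 1 := by
    rw [neg_mul, Real.exp_neg, ← div_eq_mul_inv, div_le_one (Real.exp_pos _)]
    linarith [Real.add_one_le_exp (s * (r + b) ^ 2)]
  have hme0 : 0 ≤ s * (r + b) ^ 2 * Real.exp (-s * (r + b) ^ 2) := by positivity
  rw [Real.norm_eq_abs, abs_le]
  constructor <;> nlinarith

/-! ### Consensus -/

/-- The disagreements `e` contract up to a perturbation whose size is controlled by `α` and by `e`
itself; their squares are then summable. Young's inequality with parameter `η = (1 - q) / 2` keeps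
the contraction factor `q (1 + η)` at most `(1 + q) / 2`. -/
theorem summable_disagreement {N : ℕ} {E : Type*} [NormedAddCommGroup E] [NormedSpace ℝ E]
    {A : Matrix (Fin N) (Fin N) ℝ} {q : ℝ} (hq0 : 0 ≤ q) (hq1 : q < 1)
    (hA : ∀ v : Fin N → E, ∑ k, ‖∑ t, A k t • v t‖ ^ 2 ≤ q * ∑ t, ‖v t‖ ^ 2)
    {α : ℕ → ℝ} (hα0 : ∀ n, 0 ≤ α n) (hα : Summable fun n => (α n) ^ 2)
    {e g : ℕ → Fin N → E} {K H : ℝ}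
    (he : ∀ n k, e (n + 1) k = ∑ t, A k t • (e n t - α n • g n t))
    (hg : ∀ n k, ‖g n k‖ ≤ K * ‖e n k‖ + H) :
    Summable fun n => ∑ k, ‖e n k‖ ^ 2 := by
  set η := (1 - q) / 2 with hη
  have hη0 : 0 < η := by rw [hη]; linarith
  set D := 2 * (1 + 1 / η) with hD
  have hD0 : 0 < D := by positivity
  have hpt : ∀ n k, ‖e n k - α n • g n k‖ ^ 2
      ≤ (1 + η + D * K ^ 2 * α n ^ 2) * ‖e n k‖ ^ 2 + D * H ^ 2 * α n ^ 2 := by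
    intro n k
    set a := ‖e n k‖
    have h1 : ‖e n k - α n • g n k‖ ≤ a + α n * ‖g n k‖ := by
      refine (norm_sub_le _ _).trans ?_
      rw [norm_smul, Real.norm_of_nonneg (hα0 n)]
    set c := α n * ‖g n k‖ with hc
    have h2 : ‖e n k - α n • g n k‖ ^ 2 ≤ (a + c) ^ 2 := pow_le_pow_left₀ (norm_nonneg _) h1 2
    have h3 : (a + c) ^ 2 ≤ (1 + η) * a ^ 2 + (1 + 1 / η) * c ^ 2 := by
      have : (1 + η) * a ^ 2 + (1 + 1 / η) * c ^ 2 - (a + c) ^ 2 = (η * a - c) ^ 2 / η := by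
        field_simp; ring
      have : 0 ≤ (η * a - c) ^ 2 / η := by positivity
      linarith
    have h4 : ‖g n k‖ ^ 2 ≤ 2 * K ^ 2 * a ^ 2 + 2 * H ^ 2 := by
      have : ‖g n k‖ ^ 2 ≤ (K * a + H) ^ 2 := pow_le_pow_left₀ (norm_nonneg _) (hg n k) 2
      nlinarith [sq_nonneg (K * a - H)]
    have h5 : (1 + 1 / η) * c ^ 2 ≤ (1 + 1 / η) * (α n ^ 2 * (2 * K ^ 2 * a ^ 2 + 2 * H ^ 2)) := by
      rw [hc, mul_pow]; gcongr
    calc _ ≤ _ := h2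
      _ ≤ _ := h3
      _ ≤ (1 + η) * a ^ 2 + (1 + 1 / η) * (α n ^ 2 * (2 * K ^ 2 * a ^ 2 + 2 * H ^ 2)) := by linarith
      _ = _ := by rw [hD]; ring
  refine summable_of_eventually_contracting (q := (1 + q) / 2) (B := D * K ^ 2 + N * (D * H ^ 2))
    (c := fun n => α n ^ 2) (fun n => by positivity) (fun n => by positivity) (by linarith) hα
    fun n => ?_
  set S := ∑ k, ‖e n k‖ ^ 2 with hS
  have hS0 : 0 ≤ S := by positivity
  have h1 : ∑ k, ‖e n k - α n • g n k‖ ^ 2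
      ≤ (1 + η + D * K ^ 2 * α n ^ 2) * S + N * (D * H ^ 2 * α n ^ 2) := by
    refine (Finset.sum_le_sum fun k _ => hpt n k).trans_eq ?_
    rw [Finset.sum_add_distrib, ← Finset.mul_sum, ← hS]
    simp
  have h2 : ∑ k, ‖e (n + 1) k‖ ^ 2 ≤ q * ∑ k, ‖e n k - α n • g n k‖ ^ 2 := by
    simp only [he n]
    exact hA _
  have h3 : q * (1 + η) ≤ (1 + q) / 2 := by rw [hη]; nlinarith
  have h4 : 0 ≤ D * K ^ 2 * α n ^ 2 * S := by positivity
  have h5 : 0 ≤ N * (D * H ^ 2 * α n ^ 2) := by positivity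
  have h6 : 0 ≤ N * (D * H ^ 2 * α n ^ 2) * S := by positivity
  calc _ ≤ _ := h2
    _ ≤ q * ((1 + η + D * K ^ 2 * α n ^ 2) * S + N * (D * H ^ 2 * α n ^ 2)) := by gcongr
    _ = q * (1 + η) * S + q * (D * K ^ 2 * α n ^ 2 * S) + q * (N * (D * H ^ 2 * α n ^ 2)) := by ring
    _ ≤ (1 + q) / 2 * S + 1 * (D * K ^ 2 * α n ^ 2 * S) + 1 * (N * (D * H ^ 2 * α n ^ 2)) := by
        gcongr
    _ ≤ _ := by nlinarith [mul_nonneg (mul_nonneg hD0.le (sq_nonneg K)) (sq_nonneg (α n))]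

/-! ### Perturbed gradient descent -/

theorem summable_of_le_telescope {a v c : ℕ → ℝ} (ha : ∀ n, 0 ≤ a n) (hv : ∀ n, 0 ≤ v n)
    (hc0 : ∀ n, 0 ≤ c n) (hc : Summable c) (h : ∀ n, a n ≤ v n - v (n + 1) + c n) :
    Summable a := by
  refine summable_of_sum_range_le (c := v 0 + ∑' n, c n) ha fun m => ?_
  have h1 : ∑ n ∈ Finset.range m, a n ≤ ∑ n ∈ Finset.range m, (v n - v (n + 1) + c n) :=
    Finset.sum_le_sum fun n _ => h n
  rw [Finset.sum_add_distrib, Finset.sum_range_sub'] at h1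
  linarith [hv m, hc.sum_le_tsum (Finset.range m) fun i _ => hc0 i]

/-- Gradient descent along inexact gradients `p n` with square-summable errors drives the true
gradient to zero, provided the true gradients stay bounded. -/
theorem tendsto_gradient_zero {E : Type*} [NormedAddCommGroup E] [InnerProductSpace ℝ E]
    [CompleteSpace E] {f : E → ℝ} {G : E → E} (hf : HasLipGrad f G) (hf0 : ∀ w, 0 ≤ f w)
    {α : ℕ → ℝ} (hα1 : ∀ n, α n ∈ Set.Ioc (0 : ℝ) 1) (hα2 : ¬ Summable α)
    (hα3 : Summable fun n => (α n) ^ 2) {c P : ℝ} (hc : 0 < c) {z p : ℕ → E}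
    (hz : ∀ n, z (n + 1) = z n - (c * α n) • p n) (hP : ∀ n, ‖G (z n)‖ ≤ P)
    (hT : Summable fun n => ‖p n - G (z n)‖ ^ 2) :
    Tendsto (fun n => ‖G (z n)‖) atTop (nhds 0) := by
  obtain ⟨hd, K, hK, hL⟩ := hf
  have hP0 : 0 ≤ P := (norm_nonneg _).trans (hP 0)
  have hstep : ∀ n, ‖z (n + 1) - z n‖ = c * α n * ‖p n‖ := by
    intro n
    rw [hz, sub_sub_cancel_left, norm_neg, norm_smul, Real.norm_of_nonneg]
    exact mul_nonneg hc.le (hα1 n).1.le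
  have hpn : ∀ n, ‖p n‖ ≤ P + ‖p n - G (z n)‖ := by
    intro n
    have := norm_add_le (G (z n)) (p n - G (z n))
    rw [add_sub_cancel] at this
    linarith [hP n]
  have hsum : Summable fun n => α n * ‖G (z n)‖ ^ 2 := by
    have : Summable fun n => c / 2 * (α n * ‖G (z n)‖ ^ 2) := by
      refine summable_of_le_telescope (v := fun n => f (z n))
        (c := fun n => (c / 2 + 2 * K * c ^ 2) * ‖p n - G (z n)‖ ^ 2
          + 2 * K * c ^ 2 * P ^ 2 * α n ^ 2)
        (fun n => ?_) (fun n => hf0 _) (fun n => by positivity)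
        ((hT.mul_left _).add (hα3.mul_left _)) fun n => ?_
      · have := (hα1 n).1
        positivity
      obtain ⟨ha0, ha1⟩ := hα1 n
      have h1 := le_of_hasGradientAt hd hK hL (z n) (z (n + 1))
      rw [hstep] at h1
      rw [show z (n + 1) - z n = -((c * α n) • p n) by rw [hz]; abel, inner_neg_right,
        real_inner_smul_right] at h1
      have h2 := norm_sub_sq_real (p n) (G (z n))
      rw [real_inner_comm] at h2
      set T := ‖p n - G (z n)‖ with hTdef
      have h3 : ‖p n‖ ^ 2 ≤ 2 * P ^ 2 + 2 * T ^ 2 := by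
        have : ‖p n‖ ^ 2 ≤ (P + T) ^ 2 := pow_le_pow_left₀ (norm_nonneg _) (hpn n) 2
        nlinarith [sq_nonneg (P - T)]
      have h4 : ‖G (z n)‖ ^ 2 / 2 - T ^ 2 / 2 ≤ ⟪G (z n), p n⟫ := by
        nlinarith [sq_nonneg ‖p n‖]
      have h5 : c * α n * (‖G (z n)‖ ^ 2 / 2 - T ^ 2 / 2) ≤ c * α n * ⟪G (z n), p n⟫ := by gcongr
      have h6 : K * (c * α n * ‖p n‖) ^ 2 ≤ K * c ^ 2 * α n ^ 2 * (2 * P ^ 2 + 2 * T ^ 2) := by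
        rw [show K * (c * α n * ‖p n‖) ^ 2 = K * c ^ 2 * α n ^ 2 * ‖p n‖ ^ 2 by ring]
        gcongr
      have h7 : c * α n * (T ^ 2 / 2) ≤ c * 1 * (T ^ 2 / 2) := by gcongr
      have h8 : K * c ^ 2 * α n ^ 2 * (2 * T ^ 2) ≤ K * c ^ 2 * 1 * (2 * T ^ 2) := by
        gcongr
        exact pow_le_one₀ ha0.le ha1
      linarith
    exact (summable_mul_left_iff (by positivity)).1 this
  refine tendsto_zero_of_summable_mul_sq (c := K * c * (P + (1 + ∑' n, ‖p n - G (z n)‖ ^ 2)))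
    hα1 hα2 hα3 (fun _ => norm_nonneg _) (fun n => ?_) hsum
  have h1 : ‖p n - G (z n)‖ ^ 2 ≤ ∑' n, ‖p n - G (z n)‖ ^ 2 :=
    hT.le_tsum n fun _ _ => sq_nonneg _
  have h2 : ‖p n‖ ≤ P + (1 + ∑' n, ‖p n - G (z n)‖ ^ 2) := by
    nlinarith [hpn n, sq_nonneg (‖p n - G (z n)‖ - 1), norm_nonneg (p n - G (z n))]
  have ha0 := (hα1 n).1
  calc |‖G (z (n + 1))‖ - ‖G (z n)‖| ≤ ‖G (z (n + 1)) - G (z n)‖ := abs_norm_sub_norm_le _ _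
    _ ≤ K * ‖z (n + 1) - z n‖ := hL _ _
    _ = K * (c * α n * ‖p n‖) := by rw [hstep]
    _ ≤ K * (c * α n * (P + (1 + ∑' n, ‖p n - G (z n)‖ ^ 2))) := by gcongr
    _ = _ := by ring

/-! ### The distributed iteration -/

/-- Convergence of the distributed iteration for arbitrary local costs with gradients `h k` that are
Lipschitz, the total cost `f` having gradient `∑ k, h k`. -/
theorem distributed_convergence {d N : ℕ} (hN : 1 ≤ N)
    {f : EuclideanSpace ℝ (Fin d) → ℝ}
    {h : Fin N → EuclideanSpace ℝ (Fin d) → EuclideanSpace ℝ (Fin d)}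
    (hf : HasLipGrad f fun w => ∑ k, h k w) (hf0 : ∀ w, 0 ≤ f w)
    {K : ℝ} (hK : 0 ≤ K) (hL : ∀ k u v, ‖h k u - h k v‖ ≤ K * ‖u - v‖)
    {C : Matrix (Fin N) (Fin N) ℝ} (hCsymm : Cᵀ = C) (hCrow : ∀ k, ∑ t, C k t = 1)
    (hCspec : spectralRadius ℝ (C - (N : ℝ)⁻¹ • Matrix.of (fun _ _ => (1 : ℝ))) < 1)
    {α : ℕ → ℝ} (hα1 : ∀ n, α n ∈ Set.Ioc (0 : ℝ) 1)
    (hα2 : ¬ Summable α) (hα3 : Summable fun n => (α n) ^ 2)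
    {w : ℕ → Fin N → EuclideanSpace ℝ (Fin d)}
    (hw : ∀ n k, w (n + 1) k = ∑ t, C k t • (w n t - α n • h t (w n t)))
    {wbar : ℕ → EuclideanSpace ℝ (Fin d)}
    (hwbar : ∀ n, wbar n = (N : ℝ)⁻¹ • ∑ k, w n k)
    (hbound : ∃ M, ∀ n, ‖wbar n‖ ≤ M) :
    (∀ wstar, MapClusterPt wstar atTop wbar → ∑ k, h k wstar = 0) ∧
    (∀ k, Tendsto (fun n => ‖w n k - wbar n‖) atTop (nhds 0)) := by
  obtain ⟨M, hM⟩ := hbound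
  have hN0 : (N : ℝ) ≠ 0 := by positivity
  set A := C - (N : ℝ)⁻¹ • Matrix.of (fun _ _ => (1 : ℝ)) with hAdef
  have hAapp : ∀ k t, A k t = C k t - (N : ℝ)⁻¹ := by intro k t; simp [hAdef]
  have hAherm : A.IsHermitian := by
    ext k t
    have := congrFun (congrFun hCsymm k) t
    simp only [Matrix.transpose_apply] at this
    simp [hAapp, this]
  have hArow : ∀ k, ∑ t, A k t = 0 := by
    intro k
    simp [hAapp, Finset.sum_sub_distrib, hCrow, hN0]
  have hCcol : ∀ t, ∑ k, C k t = 1 := by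
    intro t
    rw [← hCrow t]
    exact Finset.sum_congr rfl fun k _ => congrFun (congrFun hCsymm t) k
  obtain ⟨q, hq0, hq1, hq⟩ := exists_contraction (d := d) hAherm hCspec
  -- Double stochasticity makes the average follow a gradient step of its own.
  have hbar : ∀ n, wbar (n + 1) = (N : ℝ)⁻¹ • ∑ t, (w n t - α n • h t (w n t)) := by
    intro n
    rw [hwbar]
    congr 1
    simp only [hw]
    rw [Finset.sum_comm]
    refine Finset.sum_congr rfl fun t _ => ?_
    rw [← Finset.sum_smul, hCcol, one_smul]
  have hz : ∀ n, wbar (n + 1) = wbar n - ((N : ℝ)⁻¹ * α n) • ∑ t, h t (w n t) := by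
    intro n
    rw [hbar, hwbar n, Finset.sum_sub_distrib, smul_sub, ← Finset.smul_sum, smul_smul]
  have he : ∀ n k, w (n + 1) k - wbar (n + 1)
      = ∑ t, A k t • ((w n t - wbar n) - α n • h t (w n t)) := by
    intro n k
    have h1 : ∀ t, A k t • ((w n t - wbar n) - α n • h t (w n t))
        = C k t • (w n t - α n • h t (w n t)) - (N : ℝ)⁻¹ • (w n t - α n • h t (w n t))
          - A k t • wbar n := by
      intro t
      rw [sub_right_comm, smul_sub, hAapp, sub_smul]
    rw [Finset.sum_congr rfl fun t _ => h1 t, Finset.sum_sub_distrib, Finset.sum_sub_distrib,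
      ← Finset.sum_smul, hArow, zero_smul, sub_zero, hw, hbar, Finset.smul_sum]
  have hsub : ∀ n k, ‖h k (w n k) - h k (wbar n)‖ ≤ K * ‖w n k - wbar n‖ := fun n k => hL _ _ _
  have hHbar : ∀ n k, ‖h k (wbar n)‖ ≤ ∑ j, ‖h j 0‖ + K * M := by
    intro n k
    have h1 : ‖h k (wbar n)‖ ≤ ‖h k 0‖ + ‖h k (wbar n) - h k 0‖ := by
      simpa using norm_add_le (h k 0) (h k (wbar n) - h k 0)
    have h2 : ‖h k (wbar n) - h k 0‖ ≤ K * M := by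
      refine (hL k (wbar n) 0).trans ?_
      rw [sub_zero]
      gcongr
      exact hM n
    have h3 : ‖h k 0‖ ≤ ∑ j, ‖h j 0‖ :=
      Finset.single_le_sum (f := fun j => ‖h j 0‖) (fun _ _ => norm_nonneg _) (Finset.mem_univ k)
    linarith
  have hS : Summable fun n => ∑ k, ‖w n k - wbar n‖ ^ 2 := by
    refine summable_disagreement hq0 hq1 hq (fun n => (hα1 n).1.le) hα3
      (e := fun n k => w n k - wbar n) (g := fun n k => h k (w n k)) (K := K)
      (H := ∑ j, ‖h j 0‖ + K * M) he fun n k => ?_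
    have h1 : ‖h k (w n k)‖ ≤ ‖h k (wbar n)‖ + ‖h k (w n k) - h k (wbar n)‖ := by
      simpa using norm_add_le (h k (wbar n)) (h k (w n k) - h k (wbar n))
    linarith [hsub n k, hHbar n k]
  refine ⟨fun wstar hstar => ?_, fun k => ?_⟩
  · have hT : Summable fun n => ‖∑ k, h k (w n k) - ∑ k, h k (wbar n)‖ ^ 2 := by
      refine Summable.of_nonneg_of_le (fun n => by positivity) (fun n => ?_)
        (hS.mul_left (N * K ^ 2))
      have h1 : ‖∑ k, h k (w n k) - ∑ k, h k (wbar n)‖ ≤ ∑ k, K * ‖w n k - wbar n‖ := by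
        rw [← Finset.sum_sub_distrib]
        exact (norm_sum_le _ _).trans (Finset.sum_le_sum fun k _ => hsub n k)
      calc _ ≤ (∑ k, K * ‖w n k - wbar n‖) ^ 2 := pow_le_pow_left₀ (norm_nonneg _) h1 2
        _ ≤ _ := sq_sum_le_card_mul_sum_sq
        _ = _ := by simp [mul_pow, Finset.mul_sum, mul_assoc]
    have hlim := tendsto_gradient_zero hf hf0 hα1 hα2 hα3 (c := (N : ℝ)⁻¹)
      (P := ∑ _k : Fin N, (∑ j, ‖h j 0‖ + K * M)) (by positivity) hz
      (fun n => (norm_sum_le _ _).trans (Finset.sum_le_sum fun k _ => hHbar n k)) hT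
    obtain ⟨_, K', hK', hL'⟩ := hf
    have hcont : Continuous fun w => ‖∑ k, h k w‖ :=
      (LipschitzWith.of_dist_le_mul (K := ⟨K', hK'⟩) fun u v => by
        rw [dist_eq_norm, dist_eq_norm]; exact hL' u v).continuous.norm
    have hcl := hstar.continuousAt_comp hcont.continuousAt
    have heq : ‖∑ k, h k wstar‖ = 0 := by
      have h1 : ClusterPt ‖∑ k, h k wstar‖ (nhds (0 : ℝ)) := ClusterPt.mono hcl hlim
      have : (nhds ‖∑ k, h k wstar‖ ⊓ nhds (0 : ℝ)).NeBot := h1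
      exact eq_of_nhds_neBot this
    exact norm_eq_zero.1 heq
  · have h0 := hS.tendsto_atTop_zero
    have h1 : Tendsto (fun n => ‖w n k - wbar n‖ ^ 2) atTop (nhds 0) :=
      squeeze_zero (fun n => by positivity) (fun n => Finset.single_le_sum
        (f := fun k => ‖w n k - wbar n‖ ^ 2) (fun _ _ => by positivity) (Finset.mem_univ k)) h0
    have h2 := h1.sqrt
    simpa [Real.sqrt_sq] using h2

theorem stmt14 {d : ℕ} {N : ℕ} (hN : 1 ≤ N)
    (Lk Uk : Fin N → ℕ) (hL : 1 ≤ ∑ k, Lk k) (hU : 1 ≤ ∑ k, Uk k)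
    (x : (k : Fin N) → Fin (Lk k) → EuclideanSpace ℝ (Fin d))
    (y : (k : Fin N) → Fin (Lk k) → ℝ)
    (hy : ∀ k i, y k i = 1 ∨ y k i = -1)
    (xu : (k : Fin N) → Fin (Uk k) → EuclideanSpace ℝ (Fin d))
    (C1 C2 s b : ℝ) (hC1 : 0 < C1) (hC2 : 0 < C2) (hs : 0 < s)
    (l g : Fin N → EuclideanSpace ℝ (Fin d) → ℝ)
    (r J : EuclideanSpace ℝ (Fin d) → ℝ)
    (hl : ∀ k w, l k w
      = (C1 / (2 * (∑ k, Lk k : ℕ))) * ∑ i, (max 0 (1 - y k i * (⟪w, x k i⟫ + b))) ^ 2)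
    (hg : ∀ k w, g k w
      = (C2 / (2 * (∑ k, Uk k : ℕ))) * ∑ i, Real.exp (-s * (⟪w, xu k i⟫ + b) ^ 2))
    (hr : ∀ w, r w = (1 / 2) * ‖w‖ ^ 2)
    (hJ : ∀ w, J w = ∑ k, l k w + ∑ k, g k w + r w)
    (C : Matrix (Fin N) (Fin N) ℝ)
    (hCsymm : Cᵀ = C) (hCpos : ∀ k t, 0 ≤ C k t) (hCrow : ∀ k, ∑ t, C k t = 1)
    (hCspec : spectralRadius ℝ
      (C - (N : ℝ)⁻¹ • Matrix.of (fun _ _ => (1 : ℝ))) < 1)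
    (α : ℕ → ℝ) (hα1 : ∀ n, α n ∈ Set.Ioc (0 : ℝ) 1)
    (hα2 : ¬ Summable α) (hα3 : Summable fun n => (α n) ^ 2)
    (w : ℕ → Fin N → EuclideanSpace ℝ (Fin d))
    (hw : ∀ n k, w (n + 1) k
      = ∑ t, C k t • (w n t - α n • (gradient (l t) (w n t) + gradient (g t) (w n t)
          + (N : ℝ)⁻¹ • gradient r (w n t))))
    (wbar : ℕ → EuclideanSpace ℝ (Fin d))
    (hwbar : ∀ n, wbar n = (N : ℝ)⁻¹ • ∑ k, w n k)
    (hbound : ∃ M, ∀ n, ‖wbar n‖ ≤ M) :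
    (∀ wstar, MapClusterPt wstar atTop wbar → gradient J wstar = 0) ∧
    (∀ k, Tendsto (fun n => ‖w n k - wbar n‖) atTop (nhds 0)) := by
  have hlG : ∀ k, ∃ G, HasLipGrad (l k) G := by
    intro k
    choose G hG using fun i => hasLipGrad_hinge (y k i) b (x k i)
    rw [funext (hl k)]
    exact ⟨_, (HasLipGrad.sum Finset.univ hG).const_mul _⟩
  have hgG : ∀ k, ∃ G, HasLipGrad (g k) G := by
    intro k
    choose G hG using fun i => hasLipGrad_gauss hs b (xu k i)
    rw [funext (hg k)]
    exact ⟨_, (HasLipGrad.sum Finset.univ hG).const_mul _⟩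
  have hrG : HasLipGrad r fun w => w := by
    rw [funext hr]
    exact hasLipGrad_half_norm_sq
  choose Gl hGl using hlG
  choose Gg hGg using hgG
  have hloc : ∀ k, HasLipGrad (fun w => l k w + g k w + (N : ℝ)⁻¹ * r w)
      fun w => Gl k w + Gg k w + (N : ℝ)⁻¹ • w :=
    fun k => ((hGl k).add (hGg k)).add (hrG.const_mul _)
  have hN0 : (N : ℝ) ≠ 0 := by positivity
  have hJG : HasLipGrad J fun w => ∑ k, (Gl k w + Gg k w + (N : ℝ)⁻¹ • w) := by
    have hJeq : J = fun w => ∑ k, (l k w + g k w + (N : ℝ)⁻¹ * r w) := by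
      funext w
      rw [hJ, Finset.sum_add_distrib, Finset.sum_add_distrib]
      simp [hN0]
    rw [hJeq]
    exact HasLipGrad.sum Finset.univ hloc
  have hJ0 : ∀ w, 0 ≤ J w := by
    intro w
    rw [hJ, hr]
    have h1 : ∀ k, 0 ≤ l k w := fun k => by rw [hl]; positivity
    have h2 : ∀ k, 0 ≤ g k w := fun k => by rw [hg]; positivity
    have h3 := Finset.sum_nonneg fun k (_ : k ∈ Finset.univ) => h1 k
    have h4 := Finset.sum_nonneg fun k (_ : k ∈ Finset.univ) => h2 k
    positivity
  -- The local Lipschitz constants are replaced by their sum, a common one.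
  choose K hK hL using fun k => (hloc k).2
  have hKsum : ∀ k, K k ≤ ∑ j, K j := fun k =>
    Finset.single_le_sum (fun j _ => hK j) (Finset.mem_univ k)
  have hw' : ∀ n k, w (n + 1) k = ∑ t, C k t • (w n t - α n •
      (Gl t (w n t) + Gg t (w n t) + (N : ℝ)⁻¹ • w n t)) := by
    intro n k
    rw [hw]
    refine Finset.sum_congr rfl fun t _ => ?_
    rw [((hGl t).1 _).gradient, ((hGg t).1 _).gradient, (hrG.1 _).gradient]
  have hmain := distributed_convergence hN hJG hJ0 (Finset.sum_nonneg fun k _ => hK k)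
    (fun k u v => (hL k u v).trans (mul_le_mul_of_nonneg_right (hKsum k) (norm_nonneg _)))
    hCsymm hCrow hCspec hα1 hα2 hα3 hw' hwbar hbound
  refine ⟨fun wstar hstar => ?_, hmain.2⟩
  rw [(hJG.1 wstar).gradient]
  exact hmain.1 wstar hstar
end

section
/- Let L ≥ 1 and let C be a real symmetric L×L matrix with C·1 = 1 (rows summing to one) and such that the spectral radius of C − (1/L)11ᵀ is strictly less than 1. Then C^n converges to (1/L)11ᵀ as n → ∞; consequently, for every initial vector v ∈ ℝ^L the decentralized average consensus iterates C^n v converge to the vector all of whose entries equal the average (1/L)Σ_{i=1}^L v_i. -/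
/-!
Write `J = (1/L) 11ᵀ`. Symmetry and `C 1 = 1` give `C J = J C = J`, and `J² = J`, so that
`C ^ n = (C - J) ^ n + J` for `n ≥ 1`. Since `C - J` is symmetric, its `ℓ²` operator norm equals its
spectral radius, which is less than one; hence `(C - J) ^ n → 0`.
-/

open Matrix Filter

open scoped Matrix.Norms.L2Operator in
/-- The `ℓ²` operator norm of a symmetric matrix is its (real) spectral radius, so powers decay as
soon as the latter is less than one. The topology in the conclusion is the entrywise one, which the
operator norm induces definitionally. -/
lemma tendsto_pow_zero_of_symm {L : ℕ} (D : Matrix (Fin L) (Fin L) ℝ) (hD : Dᵀ = D)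
    (h : spectralRadius ℝ D < 1) : Tendsto (fun n : ℕ => D ^ n) atTop (nhds 0) := by
  have hsa : IsSelfAdjoint (toEuclideanCLM (n := Fin L) (𝕜 := ℝ) D) := by
    have : IsSelfAdjoint D := by
      rw [IsSelfAdjoint, star_eq_conjTranspose, conjTranspose_eq_transpose_of_trivial, hD]
    exact this.map _
  have hs : spectralRadius ℝ (toEuclideanCLM (n := Fin L) (𝕜 := ℝ) D) = spectralRadius ℝ D := by
    rw [spectralRadius, spectralRadius, AlgEquiv.spectrum_eq]
  have hn : ‖D‖ < 1 := by
    rw [← hs, ContinuousLinearMap.spectralRadius_eq_nnnorm _ hsa] at h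
    rw [cstar_norm_def]
    exact_mod_cast h
  exact tendsto_pow_atTop_nhds_zero_of_norm_lt_one hn

/-- In a ring, if `j` is an idempotent absorbed by `c` on both sides, then the powers of `c`
split off `j`. -/
lemma pow_succ_eq_sub_pow_add {R : Type*} [Ring R] {c j : R} (hcj : c * j = j) (hjc : j * c = j)
    (hjj : j * j = j) (n : ℕ) : c ^ (n + 1) = (c - j) ^ (n + 1) + j := by
  induction n with
  | zero => simp
  | succ n ih =>
    have hz : (c - j) ^ (n + 1) * j = 0 := by
      rw [pow_succ, mul_assoc, sub_mul, hcj, hjj, sub_self, mul_zero]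
    rw [pow_succ, ih, add_mul, hjc, pow_succ (c - j) (n + 1), mul_sub, hz, sub_zero]

theorem stmt16 (L : ℕ) (hL : 1 ≤ L) (C : Matrix (Fin L) (Fin L) ℝ)
    (hsymm : Cᵀ = C)
    (hrow : C.mulVec (fun _ => 1) = fun _ => 1)
    (hspec : spectralRadius ℝ
        (C - (L : ℝ)⁻¹ • Matrix.of (fun _ _ => (1 : ℝ))) < 1) :
    Tendsto (fun n : ℕ => C ^ n) atTop
      (nhds ((L : ℝ)⁻¹ • Matrix.of (fun _ _ => (1 : ℝ)))) ∧
    ∀ v : Fin L → ℝ, Tendsto (fun n : ℕ => (C ^ n).mulVec v) atTop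
      (nhds (fun _ => (L : ℝ)⁻¹ * ∑ i, v i)) := by
  have hL0 : (L : ℝ) ≠ 0 := by positivity
  set J : Matrix (Fin L) (Fin L) ℝ := (L : ℝ)⁻¹ • Matrix.of (fun _ _ => (1 : ℝ)) with hJ
  have hJt : Jᵀ = J := by ext i j; simp [hJ]
  have hCJ : C * J = J := by
    ext i j
    have := congrFun hrow i
    simp only [mulVec, dotProduct, mul_one] at this
    simp [hJ, mul_apply, ← Finset.sum_mul, this]
  have hJC : J * C = J := by
    have := congrArg transpose hCJ
    rwa [transpose_mul, hJt, hsymm] at this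
  have hJJ : J * J = J := by
    ext i j
    simp [hJ, mul_apply, hL0]
  have hlim : Tendsto (fun n : ℕ => C ^ n) atTop (nhds J) := by
    have h0 := tendsto_pow_zero_of_symm (C - J) (by rw [transpose_sub, hsymm, hJt]) hspec
    rw [← tendsto_add_atTop_iff_nat 1] at h0 ⊢
    simp only [pow_succ_eq_sub_pow_add hCJ hJC hJJ]
    simpa using h0.add_const J
  refine ⟨hlim, fun v => ?_⟩
  have hJv : J *ᵥ v = fun _ => (L : ℝ)⁻¹ * ∑ i, v i := by
    ext i
    simp [hJ, mulVec, dotProduct, Finset.mul_sum]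
  rw [← hJv]
  exact ((continuous_id.matrix_mulVec continuous_const).tendsto J).comp hlim
end
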